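/- arXiv:1105.0510 — 2 statements merged into one kernel-verified Lean document; each statement's English description precedes it below -/
import Mathlib

section
/- (Corollary 1, unanimous rejection group rule.) In the two-group voting model, for every j₁ ∈ S₁ and j₂ ∈ S₂, E[X_{j₁}·1_{G₁ ∪ G₂}] − E[X_{j₂}·1_{G₁ ∪ G₂}] = σ₁·f₁·(1 − F₂) − σ₂·f₂·(1 − F₁). -/
open MeasureTheory ProbabilityTheory Real Set

/-- Density of the standard normal distribution. -/
noncomputable def stdPdf (y : ℝ) : ℝ := (Real.sqrt (2 * Real.pi))⁻¹ * Real.exp (-(y ^ 2) / 2)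

/-- Cumulative distribution function of the standard normal distribution. -/
noncomputable def stdCdf (y : ℝ) : ℝ := ∫ x in Set.Iic y, stdPdf x

/-!
Centre the opinions: the common mean contributes equally to both expectations, so only the
integrals of `X_j - μ` over `G₁ ∪ G₂` matter. For `j` in the first group, independence of the two
groups makes the integral over `G₂` vanish and leaves `P(G₂ᶜ)` times the integral over `G₁`. The
event `G₁` is invariant under permutations of the first group, so there `X_j` may be replaced by
`A₁`, and the truncated mean of the centred Gaussian `A₁ - μ` is its variance times its density at
the threshold, that is, `σ₁ f₁`.
-/

open Filter Topology
open scoped NNReal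

section Gaussian

lemma gaussianPDFReal_zero_one : gaussianPDFReal 0 1 = stdPdf := by
  ext y
  simp [gaussianPDFReal, stdPdf]

lemma measureReal_stdGaussian_Iio (a : ℝ) : (gaussianReal 0 1).real (Iio a) = stdCdf a := by
  rw [measureReal_def, gaussianReal_apply_eq_integral 0 one_ne_zero, ENNReal.toReal_ofReal
    (integral_nonneg (gaussianPDFReal_nonneg 0 1)), gaussianPDFReal_zero_one, stdCdf,
    integral_Iic_eq_integral_Iio]

lemma gaussianReal_sq_eq_map_stdGaussian (m s : ℝ) :
    gaussianReal m (s ^ 2).toNNReal = (gaussianReal 0 1).map fun y => m - s * y := by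
  have hlaw : HasLaw (fun y => m - s * y) _ (gaussianReal 0 1) :=
    gaussianReal_const_sub (gaussianReal_const_mul HasLaw.id s) m
  rw [hlaw.map_eq]
  congr 1
  · simp
  · ext
    simp [sq_nonneg]

lemma measureReal_gaussianReal_Ioi (m t : ℝ) {s : ℝ} (hs : 0 < s) :
    (gaussianReal m (s ^ 2).toNNReal).real (Ioi t) = stdCdf ((m - t) / s) := by
  have hpreimage : (fun y => m - s * y) ⁻¹' Ioi t = Iio ((m - t) / s) := by
    ext y
    rw [mem_preimage, mem_Ioi, mem_Iio, lt_div_iff₀' hs, lt_sub_comm]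
  rw [gaussianReal_sq_eq_map_stdGaussian, map_measureReal_apply (by fun_prop) measurableSet_Ioi,
    hpreimage, measureReal_stdGaussian_Iio]

lemma sq_mul_gaussianPDFReal (m t : ℝ) {s : ℝ} (hs : 0 < s) :
    s ^ 2 * gaussianPDFReal m (s ^ 2).toNNReal t = s * stdPdf ((m - t) / s) := by
  have hexp : -(t - m) ^ 2 / (2 * s ^ 2) = -((m - t) / s) ^ 2 / 2 := by
    field_simp
    ring
  rw [gaussianPDFReal, stdPdf, Real.coe_toNNReal _ (sq_nonneg s), hexp,
    Real.sqrt_mul (by positivity), Real.sqrt_sq hs.le]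
  field_simp

lemma hasDerivAt_gaussianPDFReal (m : ℝ) (v : ℝ≥0) (x : ℝ) :
    HasDerivAt (gaussianPDFReal m v) (-(x - m) / v * gaussianPDFReal m v x) x := by
  have hexponent : HasDerivAt (fun y => -(y - m) ^ 2 / (2 * v)) (-(x - m) / v) x :=
    ((((hasDerivAt_id x).sub_const m).pow 2).neg.div_const (2 * (v : ℝ))).congr_deriv (by
      rw [← mul_div_mul_left _ (v : ℝ) two_ne_zero]
      simp [mul_sub])
  exact (hexponent.exp.const_mul (√(2 * π * v))⁻¹).congr_deriv (by rw [gaussianPDFReal]; ring)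

lemma tendsto_gaussianPDFReal_atTop (m : ℝ) (v : ℝ≥0) :
    Tendsto (gaussianPDFReal m v) atTop (𝓝 0) := by
  rcases eq_or_ne v 0 with rfl | hv
  · rw [gaussianPDFReal_zero_var]
    exact tendsto_const_nhds
  have hsq : Tendsto (fun x => (x - m) ^ 2 / (2 * v)) atTop atTop :=
    ((tendsto_pow_atTop two_ne_zero).comp
      (tendsto_atTop_add_const_right _ (-m) tendsto_id)).atTop_div_const (by positivity)
  have hlim := (tendsto_exp_neg_atTop_nhds_zero.comp hsq).const_mul (√(2 * π * v))⁻¹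
  rw [mul_zero] at hlim
  exact hlim.congr fun x => by simp [gaussianPDFReal, neg_div]

lemma integrable_id_gaussianReal (m : ℝ) (v : ℝ≥0) :
    Integrable (fun x => x) (gaussianReal m v) :=
  memLp_one_iff_integrable.mp (memLp_id_gaussianReal 1)

lemma integrable_gaussianPDFReal_mul_sub (m : ℝ) (v : ℝ≥0) :
    Integrable fun x => gaussianPDFReal m v x * (x - m) := by
  rcases eq_or_ne v 0 with rfl | hv
  · simp
  have hint := (integrable_id_gaussianReal m v).sub (integrable_const m)
  rw [gaussianReal_of_var_ne_zero m hv,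
    integrable_withDensity_iff_integrable_smul' (measurable_gaussianPDF m v)
      (ae_of_all _ fun _ => gaussianPDF_lt_top)] at hint
  simpa [toReal_gaussianPDF] using hint

-- `(x - m) p(x) = -v p'(x)` for the density `p`, so the truncated integral telescopes.
lemma setIntegral_sub_gaussianReal_Ioi (m : ℝ) (v : ℝ≥0) (t : ℝ) :
    ∫ x in Ioi t, (x - m) ∂gaussianReal m v = v * gaussianPDFReal m v t := by
  rcases eq_or_ne v 0 with rfl | hv
  · simp [gaussianReal_zero_var, setIntegral_dirac]
  have hderiv (x : ℝ) :
      HasDerivAt (fun y => -v * gaussianPDFReal m v y) (gaussianPDFReal m v x * (x - m)) x :=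
    ((hasDerivAt_gaussianPDFReal m v x).const_mul (-v : ℝ)).congr_deriv (by field_simp)
  have hlim := (tendsto_gaussianPDFReal_atTop m v).const_mul (-v : ℝ)
  calc ∫ x in Ioi t, (x - m) ∂gaussianReal m v
      = ∫ x in Ioi t, gaussianPDFReal m v x * (x - m) := by
        simp_rw [← integral_indicator measurableSet_Ioi,
          integral_gaussianReal_eq_integral_smul hv, smul_eq_mul, indicator_mul_right]
    _ = -v * 0 - -v * gaussianPDFReal m v t :=
        integral_Ioi_of_hasDerivAt_of_tendsto' (fun x _ => hderiv x)
          (integrable_gaussianPDFReal_mul_sub m v).integrableOn hlim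
    _ = v * gaussianPDFReal m v t := by ring

end Gaussian

section Independence

variable {Ω : Type*} {mΩ : MeasurableSpace Ω} {P : Measure Ω}

lemma setIntegral_preimage_union_of_indepFun {E F : Type*} [MeasurableSpace E] [MeasurableSpace F]
    {Z : Ω → E} {W : Ω → F} (hindep : IndepFun Z W P) (hZ : AEMeasurable Z P) (hW : Measurable W)
    {f : E → ℝ} (hf : Measurable f) (hint : Integrable (fun ω => f (Z ω)) P)
    (hmean : ∫ ω, f (Z ω) ∂P = 0) {C : Set E} (hC : MeasurableSet C) {D : Set F}
    (hD : MeasurableSet D) :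
    ∫ ω in Z ⁻¹' C ∪ W ⁻¹' D, f (Z ω) ∂P = P.real (W ⁻¹' D)ᶜ * ∫ ω in Z ⁻¹' C, f (Z ω) ∂P := by
  have hZC : NullMeasurableSet (Z ⁻¹' C) P := hZ.nullMeasurableSet_preimage hC
  have hWD : MeasurableSet (W ⁻¹' D)ᶜ := (hW hD).compl
  have hfactor {g : E → ℝ} (hg : Measurable g) {B : Set F} (hB : MeasurableSet B) :
      ∫ ω in W ⁻¹' B, g (Z ω) ∂P = P.real (W ⁻¹' B) * ∫ ω, g (Z ω) ∂P :=
    Indep.setIntegral_eq_mul hW.comap_le hindep.symm hZ ⟨B, hB, rfl⟩ hg.aestronglyMeasurable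
  have hsplit : Z ⁻¹' C ∪ W ⁻¹' D = W ⁻¹' D ∪ Z ⁻¹' C ∩ (W ⁻¹' D)ᶜ := by
    rw [union_inter_distrib_left, union_compl_self, inter_univ, union_comm]
  calc ∫ ω in Z ⁻¹' C ∪ W ⁻¹' D, f (Z ω) ∂P
      = ∫ ω in Z ⁻¹' C ∩ (W ⁻¹' D)ᶜ, f (Z ω) ∂P := by
        rw [hsplit, setIntegral_union₀
          (disjoint_compl_right.mono_right inter_subset_right).aedisjoint
          (hZC.inter hWD.nullMeasurableSet) hint.integrableOn hint.integrableOn,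
          hfactor hf hD, hmean, mul_zero, zero_add]
    _ = ∫ ω in (W ⁻¹' D)ᶜ, C.indicator f (Z ω) ∂P := by
        have hZC' : NullMeasurableSet (Z ⁻¹' C) (P.restrict (W ⁻¹' D)ᶜ) :=
          hZC.mono Measure.restrict_le_self
        rw [← Measure.restrict_restrict₀ hZC', ← integral_indicator₀ hZC']
        rfl
    _ = P.real (W ⁻¹' D)ᶜ * ∫ ω, C.indicator f (Z ω) ∂P := hfactor (hf.indicator hC) hD.compl
    _ = P.real (W ⁻¹' D)ᶜ * ∫ ω in Z ⁻¹' C, f (Z ω) ∂P := by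
        rw [← integral_indicator₀ hZC]
        rfl

lemma integrable_of_hasLaw {ν : Measure ℝ} (hν : Integrable (fun x => x) ν) {Z : Ω → ℝ}
    (hZ : HasLaw Z ν P) : Integrable Z P := by
  rw [← hZ.map_eq] at hν
  exact hν.comp_aemeasurable hZ.aemeasurable

lemma hasLaw_sum_gaussianReal {ι : Type*} {X : ι → Ω → ℝ} {m : ι → ℝ} {v : ι → ℝ≥0}
    (hindep : iIndepFun X P) (hlaw : ∀ j, HasLaw (X j) (gaussianReal (m j) (v j)) P)
    (S : Finset ι) :
    HasLaw (∑ j ∈ S, X j) (gaussianReal (∑ j ∈ S, m j) (∑ j ∈ S, v j)) P := by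
  classical
  have := hindep.isProbabilityMeasure
  induction S using Finset.induction_on with
  | empty =>
    simp only [Finset.sum_empty, gaussianReal_zero_var]
    exact hasLaw_dirac_of_ae_eq (ae_of_all _ fun _ => rfl)
  | insert j S hj ih =>
    simp only [Finset.sum_insert hj, ← gaussianReal_conv_gaussianReal]
    exact (hindep.indepFun_finsetSum_of_notMem₀ (fun i => (hlaw i).aemeasurable) hj).symm.hasLaw_add
      (hlaw j) ih

lemma identDistrib_comp_perm {κ E : Type*} [Countable κ] [MeasurableSpace E] {ν : Measure E}
    {X : κ → Ω → E} (hindep : iIndepFun X P) (hlaw : ∀ k, HasLaw (X k) ν P)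
    (e : Equiv.Perm κ) :
    IdentDistrib (fun ω k => X (e k) ω) (fun ω k => X k ω) P P :=
  IdentDistrib.pi (fun k => (hlaw (e k)).identDistrib (hlaw k)) (hindep.precomp e.injective) hindep

lemma setIntegral_eq_of_comp_perm_mem_iff {κ : Type*} [Countable κ] {ν : Measure ℝ}
    {X : κ → Ω → ℝ} (hindep : iIndepFun X P) (hlaw : ∀ k, HasLaw (X k) ν P)
    {C : Set (κ → ℝ)} (hC : MeasurableSet C)
    (hperm : ∀ (e : Equiv.Perm κ) (x : κ → ℝ), x ∘ e ∈ C ↔ x ∈ C) (i j : κ) :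
    ∫ ω in {ω | (X · ω) ∈ C}, X i ω ∂P = ∫ ω in {ω | (X · ω) ∈ C}, X j ω ∂P := by
  classical
  have hident := identDistrib_comp_perm hindep hlaw (Equiv.swap i j)
  have hevent : NullMeasurableSet {ω | (X · ω) ∈ C} P :=
    hident.aemeasurable_snd.nullMeasurableSet_preimage hC
  have hswap := (hident.comp ((measurable_pi_apply j).indicator hC)).integral_eq
  rw [← integral_indicator₀ hevent, ← integral_indicator₀ hevent]
  refine Eq.trans (integral_congr_ae (ae_of_all _ fun ω => ?_)) hswap
  have hmem : (fun k => X (Equiv.swap i j k) ω) ∈ C ↔ (X · ω) ∈ C :=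
    hperm (Equiv.swap i j) (X · ω)
  simp [indicator_apply, hmem]

end Independence

section Group

variable {κ : Type*} [Fintype κ]

/-- The average opinion of a group with opinions `x`, so that `A_i` is `groupMean` of the opinions
in `S_i`; its value for an empty group is `0`. -/
noncomputable def groupMean (x : κ → ℝ) : ℝ := (Fintype.card κ : ℝ)⁻¹ * ∑ k, x k

@[fun_prop]
lemma measurable_groupMean : Measurable (groupMean : (κ → ℝ) → ℝ) := by
  unfold groupMean
  fun_prop

lemma groupMean_comp_perm (e : Equiv.Perm κ) (x : κ → ℝ) : groupMean (x ∘ e) = groupMean x := by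
  simp only [groupMean, Function.comp_apply, Equiv.sum_comp]

lemma groupMean_finset {ι : Type*} (S : Finset ι) (x : ι → ℝ) :
    groupMean (fun j : S => x j) = (S.card : ℝ)⁻¹ * ∑ j ∈ S, x j := by
  rw [groupMean, Fintype.card_coe, Finset.sum_coe_sort S x]

variable {Ω : Type*} {mΩ : MeasurableSpace Ω} {P : Measure Ω} {X : κ → Ω → ℝ} {m t : ℝ}

lemma hasLaw_groupMean [Nonempty κ] {σ : ℝ} (hindep : iIndepFun X P)
    (hlaw : ∀ k, HasLaw (X k) (gaussianReal m (σ ^ 2).toNNReal) P) :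
    HasLaw (fun ω => groupMean (X · ω))
      (gaussianReal m ((σ / √(Fintype.card κ)) ^ 2).toNNReal) P := by
  have hscaled := gaussianReal_const_mul (hasLaw_sum_gaussianReal hindep hlaw Finset.univ)
    (Fintype.card κ : ℝ)⁻¹
  convert! hscaled using 1
  · simp [groupMean]
  · congr 1
    · simp
    · ext
      simp [div_pow, sq_nonneg, div_nonneg]
      field_simp

lemma measureReal_lt_groupMean [Nonempty κ] {σ : ℝ} (hσ : 0 < σ) (hindep : iIndepFun X P)
    (hlaw : ∀ k, HasLaw (X k) (gaussianReal m (σ ^ 2).toNNReal) P) :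
    P.real {ω | t < groupMean (X · ω)} = stdCdf ((m - t) / (σ / √(Fintype.card κ))) := by
  rw [(hasLaw_groupMean hindep hlaw).measureReal_eq measurableSet_Ioi]
  exact measureReal_gaussianReal_Ioi m t (by positivity)

lemma setIntegral_eq_setIntegral_groupMean {ν : Measure ℝ} (hν : Integrable (fun x => x) ν)
    (hindep : iIndepFun X P) (hlaw : ∀ k, HasLaw (X k) ν P) {C : Set (κ → ℝ)}
    (hC : MeasurableSet C) (hperm : ∀ (e : Equiv.Perm κ) (x : κ → ℝ), x ∘ e ∈ C ↔ x ∈ C) (j : κ) :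
    ∫ ω in {ω | (X · ω) ∈ C}, X j ω ∂P
      = ∫ ω in {ω | (X · ω) ∈ C}, groupMean (X · ω) ∂P := by
  have hint (k : κ) : Integrable (X k) P := integrable_of_hasLaw hν (hlaw k)
  have : Nonempty κ := ⟨j⟩
  have hsame (k : κ) := setIntegral_eq_of_comp_perm_mem_iff hindep hlaw hC hperm k j
  simp only [groupMean]
  rw [integral_const_mul, integral_finsetSum _ fun k _ => (hint k).integrableOn,
    Finset.sum_congr rfl fun k _ => hsame k, Finset.sum_const, nsmul_eq_mul, Finset.card_univ,
    inv_mul_cancel_left₀ (by positivity)]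

lemma setIntegral_sub_of_lt_groupMean {σ : ℝ} (hσ : 0 < σ) (hindep : iIndepFun X P)
    (hlaw : ∀ k, HasLaw (X k) (gaussianReal m (σ ^ 2).toNNReal) P) (j : κ) :
    ∫ ω in {ω | t < groupMean (X · ω)}, (X j ω - m) ∂P
      = σ / √(Fintype.card κ) * stdPdf ((m - t) / (σ / √(Fintype.card κ))) := by
  have := hindep.isProbabilityMeasure
  have : Nonempty κ := ⟨j⟩
  have hmean := hasLaw_groupMean hindep hlaw
  have hexchange : ∫ ω in {ω | t < groupMean (X · ω)}, X j ω ∂P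
      = ∫ ω in {ω | t < groupMean (X · ω)}, groupMean (X · ω) ∂P :=
    setIntegral_eq_setIntegral_groupMean (integrable_id_gaussianReal _ _) hindep hlaw
      (C := {x | t < groupMean x}) (measurableSet_lt (by fun_prop) (by fun_prop))
      (fun e x => by simp only [mem_ofPred_eq, groupMean_comp_perm]) j
  calc ∫ ω in {ω | t < groupMean (X · ω)}, (X j ω - m) ∂P
      = ∫ ω in {ω | t < groupMean (X · ω)}, (groupMean (X · ω) - m) ∂P := by
        rw [integral_sub (integrable_of_hasLaw (integrable_id_gaussianReal _ _)
          (hlaw j)).integrableOn (integrable_const _), integral_sub (integrable_of_hasLaw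
          (integrable_id_gaussianReal _ _) hmean).integrableOn (integrable_const _), hexchange]
    _ = ∫ x in Ioi t, (x - m) ∂gaussianReal m ((σ / √(Fintype.card κ)) ^ 2).toNNReal := by
        rw [← hmean.map_eq, setIntegral_map measurableSet_Ioi (by fun_prop) hmean.aemeasurable]
        rfl
    _ = σ / √(Fintype.card κ) * stdPdf ((m - t) / (σ / √(Fintype.card κ))) := by
        rw [setIntegral_sub_gaussianReal_Ioi, Real.coe_toNNReal _ (sq_nonneg _),
          sq_mul_gaussianPDFReal m t (by positivity)]

lemma setIntegral_sub_of_lt_groupMean_union {κ' : Type*} [Fintype κ'] [Nonempty κ']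
    {Y : κ' → Ω → ℝ} {m' u σ σ' : ℝ} (hσ : 0 < σ) (hσ' : 0 < σ') (hX : iIndepFun X P)
    (hY : iIndepFun Y P) (hXlaw : ∀ k, HasLaw (X k) (gaussianReal m (σ ^ 2).toNNReal) P)
    (hYlaw : ∀ k, HasLaw (Y k) (gaussianReal m' (σ' ^ 2).toNNReal) P)
    (hYmeas : ∀ k, Measurable (Y k)) (hXY : IndepFun (fun ω k => X k ω) (fun ω k => Y k ω) P)
    (j : κ) :
    ∫ ω in {ω | t < groupMean (X · ω)} ∪ {ω | u < groupMean (Y · ω)}, (X j ω - m) ∂P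
      = σ / √(Fintype.card κ) * stdPdf ((m - t) / (σ / √(Fintype.card κ)))
        * (1 - stdCdf ((m' - u) / (σ' / √(Fintype.card κ')))) := by
  have := hX.isProbabilityMeasure
  have hint : Integrable (X j) P := integrable_of_hasLaw (integrable_id_gaussianReal _ _) (hXlaw j)
  have hcentered : ∫ ω, (X j ω - m) ∂P = 0 := by
    rw [integral_sub hint (integrable_const m), (hXlaw j).integral_eq, integral_id_gaussianReal]
    simp
  have hYmeas' : Measurable fun ω k => Y k ω := measurable_pi_lambda _ hYmeas
  have hD : MeasurableSet {y : κ' → ℝ | u < groupMean y} :=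
    measurableSet_lt measurable_const measurable_groupMean
  have hfactor := setIntegral_preimage_union_of_indepFun (f := fun x => x j - m)
    (C := {x | t < groupMean x}) hXY (aemeasurable_pi_lambda _ fun k => (hXlaw k).aemeasurable)
    hYmeas' (by fun_prop) (hint.sub (integrable_const m)) hcentered
    (measurableSet_lt (by fun_prop) (by fun_prop)) hD
  rw [probReal_compl_eq_one_sub (hYmeas' hD)] at hfactor
  simp only [preimage_ofPred_eq] at hfactor
  rw [hfactor, setIntegral_sub_of_lt_groupMean hσ hX hXlaw, measureReal_lt_groupMean hσ' hY hYlaw,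
    mul_comm]

end Group

/-- Corollary 1, unanimous rejection group rule: for every `j₁ ∈ S₁` and `j₂ ∈ S₂`,
`E[X_{j₁}·1_{G₁ ∪ G₂}] − E[X_{j₂}·1_{G₁ ∪ G₂}] = σ₁·f₁·(1 − F₂) − σ₂·f₂·(1 − F₁)`. -/
theorem comparative_increment_unanimous_rejection
    {Ω ι : Type*} [MeasureSpace Ω] [IsProbabilityMeasure (ℙ : Measure Ω)]
    (μ σ : ℝ) (hσ : 0 < σ)
    (X : ι → Ω → ℝ) (hmeas : ∀ j, Measurable (X j))
    (hindep : iIndepFun X ℙ)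
    (hdist : ∀ j, Measure.map (X j) ℙ = gaussianReal μ ((σ ^ 2).toNNReal))
    (S₁ S₂ : Finset ι) (hdisj : Disjoint S₁ S₂)
    (g₁ g₂ : ℕ) (hcard₁ : S₁.card = g₁) (hcard₂ : S₂.card = g₂)
    (hg₁ : 1 ≤ g₁) (hg₂ : 1 ≤ g₂)
    (t₁ t₂ : ℝ)
    (A₁ A₂ : Ω → ℝ)
    (hA₁ : A₁ = fun ω => (g₁ : ℝ)⁻¹ * ∑ j ∈ S₁, X j ω)
    (hA₂ : A₂ = fun ω => (g₂ : ℝ)⁻¹ * ∑ j ∈ S₂, X j ω)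
    :
    ∀ j₁ ∈ S₁, ∀ j₂ ∈ S₂,
      (∫ ω in {ω | t₁ < A₁ ω} ∪ {ω | t₂ < A₂ ω}, X j₁ ω) - (∫ ω in {ω | t₁ < A₁ ω} ∪ {ω | t₂ < A₂ ω}, X j₂ ω) =
        (σ / Real.sqrt g₁) * stdPdf ((μ - t₁) / (σ / Real.sqrt g₁)) * (1 - stdCdf ((μ - t₂) / (σ / Real.sqrt g₂))) - (σ / Real.sqrt g₂) * stdPdf ((μ - t₂) / (σ / Real.sqrt g₂)) * (1 - stdCdf ((μ - t₁) / (σ / Real.sqrt g₁))) := by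
  intro j₁ hj₁ j₂ hj₂
  subst hcard₁ hcard₂ hA₁ hA₂
  have hlaw (j : ι) : HasLaw (X j) (gaussianReal μ (σ ^ 2).toNNReal) :=
    ⟨(hmeas j).aemeasurable, hdist j⟩
  have hint (j : ι) : Integrable (X j) :=
    integrable_of_hasLaw (integrable_id_gaussianReal _ _) (hlaw j)
  have hmean (S : Finset ι) (ω : Ω) :
      groupMean (fun j : S => X j ω) = (S.card : ℝ)⁻¹ * ∑ j ∈ S, X j ω :=
    groupMean_finset S (X · ω)
  have hcentered {S T : Finset ι} (hST : Disjoint S T) (hT : 1 ≤ T.card) (t u : ℝ) (j : S) :=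
    have : Nonempty T := (Finset.card_pos.mp hT).to_subtype
    setIntegral_sub_of_lt_groupMean_union (t := t) (u := u) hσ hσ
      (hindep.precomp Subtype.val_injective) (hindep.precomp Subtype.val_injective)
      (fun k : S => hlaw k) (fun k : T => hlaw k) (fun k => hmeas k)
      (hindep.indepFun_finset S T hST hmeas) j
  have h₁ := hcentered hdisj hg₂ t₁ t₂ ⟨j₁, hj₁⟩
  have h₂ := hcentered hdisj.symm hg₁ t₂ t₁ ⟨j₂, hj₂⟩
  rw [union_comm] at h₂
  simp only [hmean, Fintype.card_coe] at h₁ h₂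
  rw [← h₁, ← h₂, integral_sub (hint j₁).integrableOn (integrable_const μ),
    integral_sub (hint j₂).integrableOn (integrable_const μ), sub_sub_sub_cancel_right]
end

section
/- (Corollary 2.) In the two-group voting model with μ = 0, fix the threshold t₁ ∈ ℝ of Group 1 and let t ∈ ℝ. Then for every j ∈ S₂, the expected actual capital increment of member j is the same for Group 2 threshold t as for Group 2 threshold −t, under either voting rule: E[X_j·1_{{A₁>t₁} ∪ {A₂>t}}] = E[X_j·1_{{A₁>t₁} ∪ {A₂>−t}}] and E[X_j·1_{{A₁>t₁} ∩ {A₂>t}}] = E[X_j·1_{{A₁>t₁} ∩ {A₂>−t}}]. -/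
open MeasureTheory ProbabilityTheory Real Set

/-!
Flipping the signs of all members of Group 2 preserves the joint law and leaves Group 1 alone, so
`(A₁, A₂, X j)` and `(A₁, -A₂, -X j)` have the same law. On any event `D` of Group 1, `X j` thus
has integral `0`, and
`∫_{D, t < A₂} X j = -∫_{D, A₂ < -t} X j = ∫_{D, -t ≤ A₂} X j`;
since `A₂` has no atom at `-t`, the last inequality may be made strict. The union of the events of
the two groups splits into the event of Group 1 and the part of the event of Group 2 outside it.
-/

section SignFlip

variable {Ω ι β γ : Type*} {mΩ : MeasurableSpace Ω} [MeasurableSpace β] [MeasurableSpace γ]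
  {P : Measure Ω}

lemma identDistrib_pi_neg [Countable ι] [Neg γ] [MeasurableNeg γ] {X : ι → Ω → γ}
    (hindep : iIndepFun X P) (hsymm : ∀ i, IdentDistrib (X i) (-X i) P P) :
    IdentDistrib (fun ω i ↦ X i ω) (fun ω i ↦ -X i ω) P P :=
  .pi hsymm hindep (hindep.comp (fun _ x ↦ -x) fun _ ↦ measurable_neg)

lemma identDistrib_prodMk_neg_right [IsFiniteMeasure P] [Neg γ] [MeasurableNeg γ]
    {Z : Ω → β} {V : Ω → γ} (hZ : AEMeasurable Z P) (hV : IdentDistrib V (-V) P P)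
    (hZV : IndepFun Z V P) :
    IdentDistrib (fun ω ↦ (Z ω, V ω)) (fun ω ↦ (Z ω, -V ω)) P P :=
  (IdentDistrib.refl hZ).prodMk hV hZV (hZV.comp measurable_id measurable_neg)

end SignFlip

section SetIntegral

variable {Ω Ω' β E : Type*} {mΩ : MeasurableSpace Ω} {mΩ' : MeasurableSpace Ω'}
  [MeasurableSpace β] [NormedAddCommGroup E] [NormedSpace ℝ E] [MeasurableSpace E] [BorelSpace E]
  {P : Measure Ω} {P' : Measure Ω'}

lemma setIntegral_preimage_eq_of_identDistrib_prodMk {W : Ω → β} {Y : Ω → E} {W' : Ω' → β}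
    {Y' : Ω' → E} (h : IdentDistrib (fun ω ↦ (W ω, Y ω)) (fun ω ↦ (W' ω, Y' ω)) P P')
    {B : Set β} (hB : MeasurableSet B) :
    ∫ ω in W ⁻¹' B, Y ω ∂P = ∫ ω in W' ⁻¹' B, Y' ω ∂P' := by
  have hWB := h.aemeasurable_fst.fst.nullMeasurableSet_preimage hB
  have hWB' := h.aemeasurable_snd.fst.nullMeasurableSet_preimage hB
  have hcut : Measurable ((Prod.fst ⁻¹' B).indicator (Prod.snd : β × E → E)) :=
    measurable_snd.indicator (measurable_fst hB)
  rw [← integral_indicator₀ hWB, ← integral_indicator₀ hWB']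
  exact (h.comp hcut).integral_eq

variable {Z : Ω → β} {A : Ω → ℝ} {Y : Ω → E} {D : Set β} {s : ℝ}

lemma setIntegral_inter_preimage_eq_neg
    (h : IdentDistrib (fun ω ↦ (Z ω, A ω, Y ω)) (fun ω ↦ (Z ω, -A ω, -Y ω)) P P)
    (hD : MeasurableSet D) {B : Set ℝ} (hB : MeasurableSet B) :
    ∫ ω in Z ⁻¹' D ∩ A ⁻¹' B, Y ω ∂P = -∫ ω in Z ⁻¹' D ∩ (-A) ⁻¹' B, Y ω ∂P := by
  have hassoc := h.comp (MeasurableEquiv.prodAssoc (α := β) (β := ℝ) (γ := E)).symm.measurable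
  rw [← integral_neg]
  exact setIntegral_preimage_eq_of_identDistrib_prodMk (W := fun ω ↦ (Z ω, A ω))
    (W' := fun ω ↦ (Z ω, -A ω)) hassoc (hD.prod hB)

lemma setIntegral_inter_lt_eq_neg_threshold
    (h : IdentDistrib (fun ω ↦ (Z ω, A ω, Y ω)) (fun ω ↦ (Z ω, -A ω, -Y ω)) P P)
    (hY : Integrable Y P) (hD : MeasurableSet D) (hs : P {ω | A ω = -s} = 0) :
    ∫ ω in Z ⁻¹' D ∩ {ω | s < A ω}, Y ω ∂P = ∫ ω in Z ⁻¹' D ∩ {ω | -s < A ω}, Y ω ∂P := by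
  have hzero : ∫ ω in Z ⁻¹' D, Y ω ∂P = 0 := by
    have : IsAddTorsionFree E := .of_isTorsionFree ℝ E
    have hflip := setIntegral_inter_preimage_eq_neg h hD MeasurableSet.univ
    simpa only [preimage_univ, inter_univ, self_eq_neg] using hflip
  have hsplit : ∫ ω in Z ⁻¹' D ∩ {ω | A ω < -s}, Y ω ∂P +
      ∫ ω in Z ⁻¹' D \ {ω | A ω < -s}, Y ω ∂P = ∫ ω in Z ⁻¹' D, Y ω ∂P :=
    integral_inter_add_sdiff₀ (h.aemeasurable_fst.snd.fst.nullMeasurableSet_preimage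
      measurableSet_Iio) hY.integrableOn
  calc
    ∫ ω in Z ⁻¹' D ∩ {ω | s < A ω}, Y ω ∂P
      = -∫ ω in Z ⁻¹' D ∩ {ω | s < -A ω}, Y ω ∂P :=
        setIntegral_inter_preimage_eq_neg h hD measurableSet_Ioi
    _ = -∫ ω in Z ⁻¹' D ∩ {ω | A ω < -s}, Y ω ∂P := by simp only [lt_neg]
    _ = ∫ ω in Z ⁻¹' D \ {ω | A ω < -s}, Y ω ∂P :=
        neg_eq_of_add_eq_zero_right (hsplit.trans hzero)
    _ = ∫ ω in Z ⁻¹' D ∩ {ω | -s < A ω}, Y ω ∂P := by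
        refine setIntegral_congr_set ?_
        filter_upwards [measure_eq_zero_iff_ae_notMem.1 hs] with ω hω
        exact propext <| and_congr_right fun _ ↦
          not_lt.trans (Ne.le_iff_lt (Ne.symm hω))

lemma setIntegral_union_lt_eq_neg_threshold
    (h : IdentDistrib (fun ω ↦ (Z ω, A ω, Y ω)) (fun ω ↦ (Z ω, -A ω, -Y ω)) P P)
    (hY : Integrable Y P) (hD : MeasurableSet D) (hs : P {ω | A ω = -s} = 0) :
    ∫ ω in Z ⁻¹' D ∪ {ω | s < A ω}, Y ω ∂P = ∫ ω in Z ⁻¹' D ∪ {ω | -s < A ω}, Y ω ∂P := by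
  have hunion (F : Set Ω) : ∫ ω in Z ⁻¹' D ∪ F, Y ω ∂P =
      ∫ ω in Z ⁻¹' D, Y ω ∂P + ∫ ω in Z ⁻¹' Dᶜ ∩ F, Y ω ∂P := by
    rw [← integral_inter_add_sdiff₀ (h.aemeasurable_fst.fst.nullMeasurableSet_preimage hD)
      hY.integrableOn, union_inter_cancel_left, union_sdiff_left, sdiff_eq, inter_comm F,
      preimage_compl]
  rw [hunion, hunion, setIntegral_inter_lt_eq_neg_threshold h hY hD.compl hs]

end SetIntegral

section Atoms

lemma nullSingletonClass_conv {M : Type*} [AddGroup M] [MeasurableSpace M]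
    [MeasurableSingletonClass M] [MeasurableAdd₂ M] {μ ν : Measure M} [SFinite μ] [SFinite ν]
    [NullSingletonClass μ] : NullSingletonClass (μ.conv ν) where
  measure_singleton c := by
    have hsum : MeasurableSet ((fun p : M × M ↦ p.1 + p.2) ⁻¹' {c}) :=
      measurable_add (measurableSet_singleton c)
    have hfiber (y : M) : ((·, y) : M → M × M) ⁻¹' ((fun p ↦ p.1 + p.2) ⁻¹' {c}) = {c - y} := by
      ext x
      exact eq_sub_iff_add_eq.symm
    rw [Measure.conv, Measure.map_apply measurable_add (measurableSet_singleton c),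
      Measure.prod_apply_symm hsum]
    simp only [hfiber, measure_singleton, lintegral_zero]

variable {Ω ι : Type*} {mΩ : MeasurableSpace Ω} {P : Measure Ω}

lemma nullSingletonClass_map_sum {M : Type*} [AddCommGroup M] [MeasurableSpace M]
    [MeasurableSingletonClass M] [MeasurableAdd₂ M] {X : ι → Ω → M} (hmeas : ∀ i, Measurable (X i))
    (hindep : iIndepFun X P) {S : Finset ι} {j : ι} (hj : j ∈ S)
    [NullSingletonClass (P.map (X j))] : NullSingletonClass (P.map (∑ i ∈ S, X i)) := by
  classical
  have := hindep.isProbabilityMeasure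
  have hrest : IndepFun (X j) (∑ i ∈ S.erase j, X i) P :=
    (hindep.indepFun_finsetSum_of_notMem hmeas (S.notMem_erase j)).symm
  rw [← Finset.add_sum_erase S X hj, hrest.map_add_eq_map_conv_map (hmeas j) (by fun_prop)]
  exact nullSingletonClass_conv

lemma measure_mul_sum_eq_zero {X : ι → Ω → ℝ} (hmeas : ∀ i, Measurable (X i))
    (hindep : iIndepFun X P) {S : Finset ι} {j : ι} (hj : j ∈ S)
    [NullSingletonClass (P.map (X j))] {c : ℝ} (hc : c ≠ 0) (a : ℝ) :
    P {ω | c * ∑ i ∈ S, X i ω = a} = 0 := by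
  have := nullSingletonClass_map_sum hmeas hindep hj
  have hset : {ω | c * ∑ i ∈ S, X i ω = a} = (∑ i ∈ S, X i) ⁻¹' {a / c} := by
    ext ω
    simp only [mem_ofPred_eq, mem_preimage, mem_singleton_iff, Finset.sum_apply,
      eq_div_iff hc, mul_comm c]
  rw [hset, ← Measure.map_apply (by fun_prop) (measurableSet_singleton _), measure_singleton]

end Atoms

section Voting

variable {Ω ι : Type*} {mΩ : MeasurableSpace Ω} {P : Measure Ω} {X : ι → Ω → ℝ}

lemma identDistrib_neg_of_hasLaw_gaussianReal {Y : Ω → ℝ} {v : NNReal}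
    (hY : HasLaw Y (gaussianReal 0 v) P) : IdentDistrib Y (-Y) P P :=
  hY.identDistrib (by simpa only [neg_zero] using gaussianReal_neg hY)

lemma indepFun_mul_sum_of_disjoint (hmeas : ∀ i, Measurable (X i)) (hindep : iIndepFun X P)
    {S T : Finset ι} (hST : Disjoint S T) (c : ℝ) :
    IndepFun (fun ω ↦ c * ∑ i ∈ S, X i ω) (fun ω (i : T) ↦ X i ω) P := by
  have hsum (ω : Ω) : ∑ i : S, X i ω = ∑ i ∈ S, X i ω := Finset.sum_coe_sort S fun i ↦ X i ω
  have hstat : Measurable fun x : S → ℝ ↦ c * ∑ i, x i := by fun_prop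
  simpa only [Function.comp_def, id, hsum] using
    (hindep.indepFun_finset S T hST hmeas).comp hstat measurable_id

lemma identDistrib_neg_mul_sum {β : Type*} [MeasurableSpace β] {Z : Ω → β} {S : Finset ι}
    (hindep : iIndepFun (fun i : S ↦ X i) P) (hsymm : ∀ i ∈ S, IdentDistrib (X i) (-X i) P P)
    (hZ : AEMeasurable Z P) (hZX : IndepFun Z (fun ω (i : S) ↦ X i ω) P) (c : ℝ)
    {j : ι} (hj : j ∈ S) :
    IdentDistrib (fun ω ↦ (Z ω, c * ∑ i ∈ S, X i ω, X j ω))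
      (fun ω ↦ (Z ω, -(c * ∑ i ∈ S, X i ω), -X j ω)) P P := by
  have := hindep.isProbabilityMeasure
  have hflip := identDistrib_prodMk_neg_right hZ
    (identDistrib_pi_neg hindep fun i ↦ hsymm i i.2) hZX
  have hsum (ω : Ω) : ∑ i : S, X i ω = ∑ i ∈ S, X i ω := Finset.sum_coe_sort S fun i ↦ X i ω
  have hstat : Measurable fun p : β × (S → ℝ) ↦ (p.1, c * ∑ i, p.2 i, p.2 ⟨j, hj⟩) := by
    fun_prop
  simpa only [Function.comp_def, Pi.neg_apply, Finset.sum_neg_distrib, mul_neg, hsum]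
    using hflip.comp hstat

theorem group2_increment_symmetric_in_threshold_general {S₂ : Finset ι}
    (hindep : iIndepFun (fun i : S₂ ↦ X i) P) (hsymm : ∀ i ∈ S₂, IdentDistrib (X i) (-X i) P P)
    {A₁ A₂ : Ω → ℝ} (hA₁ : AEMeasurable A₁ P) (hA₁X : IndepFun A₁ (fun ω (i : S₂) ↦ X i ω) P)
    {c : ℝ} (hA₂ : A₂ = fun ω ↦ c * ∑ i ∈ S₂, X i ω) (t₁ : ℝ) {t : ℝ}
    (ht : P {ω | A₂ ω = -t} = 0) {j : ι} (hj : j ∈ S₂) (hint : Integrable (X j) P) :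
    (∫ ω in {ω | t₁ < A₁ ω} ∪ {ω | t < A₂ ω}, X j ω ∂P) =
        (∫ ω in {ω | t₁ < A₁ ω} ∪ {ω | -t < A₂ ω}, X j ω ∂P) ∧
      (∫ ω in {ω | t₁ < A₁ ω} ∩ {ω | t < A₂ ω}, X j ω ∂P) =
        (∫ ω in {ω | t₁ < A₁ ω} ∩ {ω | -t < A₂ ω}, X j ω ∂P) := by
  have hlaw : IdentDistrib (fun ω ↦ (A₁ ω, A₂ ω, X j ω)) (fun ω ↦ (A₁ ω, -A₂ ω, -X j ω)) P P :=
    hA₂ ▸ identDistrib_neg_mul_sum hindep hsymm hA₁ hA₁X c hj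
  exact ⟨setIntegral_union_lt_eq_neg_threshold hlaw hint measurableSet_Ioi ht,
    setIntegral_inter_lt_eq_neg_threshold hlaw hint measurableSet_Ioi ht⟩

end Voting

/-- Corollary 2: with `μ = 0`, for fixed `t₁` and any `t ∈ ℝ`, the expected actual capital
increment of a Group 2 member is the same for Group 2 threshold `t` as for `−t`,
under either voting rule. -/
theorem group2_increment_symmetric_in_threshold
    {Ω ι : Type*} [MeasureSpace Ω] [IsProbabilityMeasure (ℙ : Measure Ω)]
    (σ : ℝ) (hσ : 0 < σ)
    (X : ι → Ω → ℝ) (hmeas : ∀ j, Measurable (X j))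
    (hindep : iIndepFun X ℙ)
    (hdist : ∀ j, Measure.map (X j) ℙ = gaussianReal 0 ((σ ^ 2).toNNReal))
    (S₁ S₂ : Finset ι) (hdisj : Disjoint S₁ S₂)
    (g₁ g₂ : ℕ) (hcard₁ : S₁.card = g₁) (hcard₂ : S₂.card = g₂)
    (hg₁ : 1 ≤ g₁) (hg₂ : 1 ≤ g₂)
    (t₁ : ℝ)
    (A₁ A₂ : Ω → ℝ)
    (hA₁ : A₁ = fun ω => (g₁ : ℝ)⁻¹ * ∑ j ∈ S₁, X j ω)
    (hA₂ : A₂ = fun ω => (g₂ : ℝ)⁻¹ * ∑ j ∈ S₂, X j ω)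
    (t : ℝ) :
    ∀ j ∈ S₂,
      (∫ ω in {ω | t₁ < A₁ ω} ∪ {ω | t < A₂ ω}, X j ω) =
        (∫ ω in {ω | t₁ < A₁ ω} ∪ {ω | -t < A₂ ω}, X j ω) ∧
      (∫ ω in {ω | t₁ < A₁ ω} ∩ {ω | t < A₂ ω}, X j ω) =
        (∫ ω in {ω | t₁ < A₁ ω} ∩ {ω | -t < A₂ ω}, X j ω) := by
  intro j hj
  have hlaw (i : ι) : HasLaw (X i) (gaussianReal 0 (σ ^ 2).toNNReal) :=
    ⟨(hmeas i).aemeasurable, hdist i⟩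
  have hatomless : NullSingletonClass (Measure.map (X j) ℙ) :=
    hdist j ▸ nullSingletonClass_gaussianReal (toNNReal_pos.2 (pow_pos hσ 2)).ne'
  have hweight : (g₂ : ℝ)⁻¹ ≠ 0 := inv_ne_zero (Nat.cast_ne_zero.2 (Nat.one_le_iff_ne_zero.1 hg₂))
  subst hA₁ hA₂
  exact group2_increment_symmetric_in_threshold_general
    (hindep.precomp Subtype.val_injective)
    (fun i _ ↦ identDistrib_neg_of_hasLaw_gaussianReal (hlaw i))
    (by fun_prop) (indepFun_mul_sum_of_disjoint hmeas hindep hdisj _) rfl t₁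
    (measure_mul_sum_eq_zero hmeas hindep hj hweight (-t)) hj (hlaw j).hasGaussianLaw.integrable
end
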